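/- arXiv:2110.06037 — 5 statements merged into one kernel-verified Lean document; each statement's English description precedes it below -/
import Mathlib

section
/- Let Λ be a finite nonempty type and m₁, m₂ ≥ 1. Consider the directed graph with vertices: a source s, a chain u_1, …, u_{m₁}, a chain w_1, …, w_{m₂}, and a sink t, and edges s→u_1, u_1→u_2, …, u_{m₁}→t and s→w_1, …, w_{m₂}→t. Let each vertex v have cost c_v : Λ → ℝ and each edge e have adapt cost a_e : Λ → Λ → ℝ; the cost of an assignment σ of schemas to all vertices is the sum of all vertex costs plus all edge adapt costs. For κ ∈ Λ define the constrained branch values D¹_1(μ; κ) = c_{u_1}(μ) + a_{s→u_1}(κ, μ) and D¹_{j+1}(μ; κ) = c_{u_{j+1}}(μ) + min_{ν}(D¹_j(ν; κ) + a_{u_j→u_{j+1}}(ν, μ)), and analogously D²_j(μ; κ) for the w-chain. Then the minimum of cost(σ) over all assignments σ equals min over κ, λ ∈ Λ of [c_s(κ) + c_t(λ) + min_{μ}(D¹_{m₁}(μ; κ) + a_{u_{m₁}→t}(μ, λ)) + min_{ν}(D²_{m₂}(ν; κ) + a_{w_{m₂}→t}(ν, λ))]. -/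
/-!
Once the schemas `κ` of the source and `l` of the sink are fixed, the cost of the net is the sum of
a constant and of two terms depending on one chain each, so its minimum is the sum of the separate
minima. For a single chain, Bellman's principle is strengthened by letting the exit cost `e` on the
last layer be arbitrary: the minimum of `chainCost c b a f + e (f last)` over all `f` is the minimum
of `D last μ + e μ` over `μ`. The induction then closes, because minimising over the last layer
turns its cost, its adapt cost and its exit cost into an exit cost for the shorter chain.
-/

open Finset

section Minimum

variable {ι α β γ R : Type*}

lemma univ_inf'_eq_inf'_inf' [Fintype α] [Fintype β] [Fintype γ] [Nonempty α] [Nonempty β]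
    [Nonempty γ] [SemilatticeInf R] (e : α × β ≃ γ) (F : γ → R) :
    univ.inf' univ_nonempty F =
      univ.inf' univ_nonempty fun x => univ.inf' univ_nonempty fun y => F (e (x, y)) :=
  eq_of_forall_le_iff fun r => by simp [e.surjective.forall]

lemma univ_inf'_eq_inf'_inf'_snoc {n : ℕ} {Λ : Fin (n + 1) → Type*} [∀ j, Fintype (Λ j)]
    [∀ j, Nonempty (Λ j)] [SemilatticeInf R] (F : (∀ j, Λ j) → R) :
    univ.inf' univ_nonempty F =
      univ.inf' univ_nonempty fun μ => univ.inf' univ_nonempty fun f => F (Fin.snoc f μ) :=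
  univ_inf'_eq_inf'_inf' (Fin.snocEquiv Λ) F

variable [AddCommMonoid R] [LinearOrder R] [IsOrderedAddMonoid R]

lemma inf'_add_const {s : Finset ι} (hs : s.Nonempty) (F : ι → R) (r : R) :
    s.inf' hs F + r = s.inf' hs fun i => F i + r :=
  map_finset_inf' (OrderHom.mk (· + r) fun _ _ h => add_le_add_left h r) hs F

lemma const_add_inf' {s : Finset ι} (hs : s.Nonempty) (F : ι → R) (r : R) :
    r + s.inf' hs F = s.inf' hs fun i => r + F i :=
  map_finset_inf' (OrderHom.mk (r + ·) fun _ _ h => add_le_add_right h r) hs F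

lemma univ_inf'_add_univ_inf' [Fintype α] [Fintype β] [Nonempty α] [Nonempty β]
    (F : α → R) (G : β → R) :
    univ.inf' univ_nonempty F + univ.inf' univ_nonempty G =
      univ.inf' univ_nonempty fun x : α × β => F x.1 + G x.2 := by
  rw [univ_inf'_eq_inf'_inf' (Equiv.refl (α × β)), inf'_add_const]
  simp only [const_add_inf', Equiv.refl_apply]

end Minimum

section Chain

variable {R : Type*} [AddCommMonoid R]

/-- Cost of the assignment `f` of schemas to a chain of `n + 1` layers, layer `j` taking its schema
from `Λ j`, with layer costs `c` and adapt costs `a` on the internal edges. The entry cost `b` is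
the adapt cost of the edge from the source, whose schema is fixed; the edge leaving the last layer
is not counted. -/
def chainCost {n : ℕ} {Λ : Fin (n + 1) → Type*} (c : ∀ j, Λ j → R) (b : Λ 0 → R)
    (a : ∀ j : Fin n, Λ j.castSucc → Λ j.succ → R) (f : ∀ j, Λ j) : R :=
  ∑ j, c j (f j) + b (f 0) + ∑ j : Fin n, a j (f j.castSucc) (f j.succ)

lemma chainCost_snoc {n : ℕ} {Λ : Fin (n + 2) → Type*} (c : ∀ j, Λ j → R) (b : Λ 0 → R)
    (a : ∀ j : Fin (n + 1), Λ j.castSucc → Λ j.succ → R) (f : ∀ j : Fin (n + 1), Λ j.castSucc)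
    (μ : Λ (Fin.last (n + 1))) :
    chainCost c b a (Fin.snoc f μ) =
      chainCost (fun j => c j.castSucc) b (fun j => a j.castSucc) f
        + (a (Fin.last n) (f (Fin.last n)) μ + c (Fin.last (n + 1)) μ) := by
  have hentry : (Fin.snoc f μ : ∀ j, Λ j) 0 = f 0 := Fin.snoc_castSucc (i := 0) ..
  have hinner (j : Fin n) : (Fin.snoc f μ : ∀ j, Λ j) j.castSucc.succ = f j.succ :=
    Fin.snoc_castSucc (i := j.succ) ..
  have hlast : (Fin.snoc f μ : ∀ j, Λ j) (Fin.last n).succ = μ := Fin.snoc_last ..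
  simp only [chainCost, Fin.sum_univ_castSucc (n := n + 1), Fin.sum_univ_castSucc (n := n),
    Fin.snoc_castSucc, Fin.snoc_last, hentry, hinner, hlast]
  abel

variable [LinearOrder R]

/-- `D` is the table of dynamic programming values of a chain with layer costs `c`, entry cost `b`
and internal adapt costs `a`. The constraint on the schema of the source enters through `b`. -/
structure IsChainDP {n : ℕ} {Λ : Fin (n + 1) → Type*} [∀ j, Fintype (Λ j)] [∀ j, Nonempty (Λ j)]
    (c : ∀ j, Λ j → R) (b : Λ 0 → R) (a : ∀ j : Fin n, Λ j.castSucc → Λ j.succ → R)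
    (D : ∀ j, Λ j → R) : Prop where
  zero : ∀ μ, D 0 μ = c 0 μ + b μ
  succ : ∀ (j : Fin n) (μ : Λ j.succ),
    D j.succ μ = c j.succ μ + univ.inf' univ_nonempty fun ν => D j.castSucc ν + a j ν μ

lemma IsChainDP.castSucc {n : ℕ} {Λ : Fin (n + 2) → Type*} [∀ j, Fintype (Λ j)]
    [∀ j, Nonempty (Λ j)] {c : ∀ j, Λ j → R} {b : Λ 0 → R}
    {a : ∀ j : Fin (n + 1), Λ j.castSucc → Λ j.succ → R} {D : ∀ j, Λ j → R}
    (hD : IsChainDP c b a D) :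
    IsChainDP (Λ := fun j => Λ j.castSucc) (fun j => c j.castSucc) b (fun j => a j.castSucc)
      (fun j => D j.castSucc) :=
  ⟨hD.zero, fun j => hD.succ j.castSucc⟩

variable [IsOrderedAddMonoid R]

theorem IsChainDP.inf'_chainCost_add {n : ℕ} {Λ : Fin (n + 1) → Type*} [∀ j, Fintype (Λ j)]
    [∀ j, Nonempty (Λ j)] {c : ∀ j, Λ j → R} {b : Λ 0 → R}
    {a : ∀ j : Fin n, Λ j.castSucc → Λ j.succ → R} {D : ∀ j, Λ j → R}
    (hD : IsChainDP c b a D) (e : Λ (Fin.last n) → R) :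
    (univ.inf' univ_nonempty fun f => chainCost c b a f + e (f (Fin.last n))) =
      univ.inf' univ_nonempty fun μ => D (Fin.last n) μ + e μ := by
  induction n with
  | zero =>
    rw [univ_inf'_eq_inf'_inf'_snoc]
    refine inf'_congr _ rfl fun μ _ => ?_
    have hlast (f : ∀ j : Fin 0, Λ j.castSucc) : (Fin.snoc f μ : ∀ j, Λ j) 0 = μ := Fin.snoc_last ..
    simp [chainCost, hD.zero, hlast]
  | succ n ih =>
    rw [univ_inf'_eq_inf'_inf'_snoc]
    refine inf'_congr _ rfl fun μ _ => ?_
    let exitCost (ν : Λ (Fin.last n).castSucc) : R :=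
      a (Fin.last n) ν μ + c (Fin.last (n + 1)) μ + e μ
    have D_last : D (Fin.last (n + 1)) μ = c (Fin.last (n + 1)) μ +
        univ.inf' univ_nonempty fun ν => D (Fin.last n).castSucc ν + a (Fin.last n) ν μ :=
      hD.succ (Fin.last n) μ
    calc
      _ = univ.inf' univ_nonempty fun f : ∀ j : Fin (n + 1), Λ j.castSucc =>
            chainCost (fun j => c j.castSucc) b (fun j => a j.castSucc) f
              + exitCost (f (Fin.last n)) := by
          simp only [chainCost_snoc, Fin.snoc_last, add_assoc, exitCost]
      _ = univ.inf' univ_nonempty fun ν => D (Fin.last n).castSucc ν + exitCost ν :=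
          ih hD.castSucc exitCost
      _ = (univ.inf' univ_nonempty fun ν => D (Fin.last n).castSucc ν + a (Fin.last n) ν μ)
            + (c (Fin.last (n + 1)) μ + e μ) := by
          simp only [inf'_add_const, exitCost, add_assoc]
      _ = D (Fin.last (n + 1)) μ + e μ := by
          rw [D_last]
          abel

end Chain

section BranchingNet

variable {R S T : Type*} [AddCommMonoid R] {n₁ n₂ : ℕ} {U : Fin (n₁ + 1) → Type*}
  {W : Fin (n₂ + 1) → Type*}

/-- Cost of the assignment `σ = (κ, f, g, l)` of schemas to the source, the two chains and the sink
of a branching net. Costs of layers are called `c` and adapt costs of edges `a`, with the suffixes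
`s`, `u`, `w`, `t` for the source, the two chains and the sink. -/
def branchingNetCost (cs : S → R) (ct : T → R) (cu : ∀ j, U j → R) (cw : ∀ j, W j → R)
    (asu : S → U 0 → R) (au : ∀ j : Fin n₁, U j.castSucc → U j.succ → R)
    (aut : U (Fin.last n₁) → T → R)
    (asw : S → W 0 → R) (aw : ∀ j : Fin n₂, W j.castSucc → W j.succ → R)
    (awt : W (Fin.last n₂) → T → R) (σ : S × (∀ j, U j) × (∀ j, W j) × T) : R :=
  cs σ.1 + ct σ.2.2.2 + (∑ j, cu j (σ.2.1 j)) + (∑ j, cw j (σ.2.2.1 j))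
    + asu σ.1 (σ.2.1 0) + (∑ j : Fin n₁, au j (σ.2.1 j.castSucc) (σ.2.1 j.succ))
    + aut (σ.2.1 (Fin.last n₁)) σ.2.2.2
    + asw σ.1 (σ.2.2.1 0) + (∑ j : Fin n₂, aw j (σ.2.2.1 j.castSucc) (σ.2.2.1 j.succ))
    + awt (σ.2.2.1 (Fin.last n₂)) σ.2.2.2

lemma branchingNetCost_eq_chainCost_add_chainCost (cs : S → R) (ct : T → R) (cu : ∀ j, U j → R)
    (cw : ∀ j, W j → R) (asu : S → U 0 → R) (au : ∀ j : Fin n₁, U j.castSucc → U j.succ → R)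
    (aut : U (Fin.last n₁) → T → R) (asw : S → W 0 → R)
    (aw : ∀ j : Fin n₂, W j.castSucc → W j.succ → R) (awt : W (Fin.last n₂) → T → R)
    (κ : S) (f : ∀ j, U j) (g : ∀ j, W j) (l : T) :
    branchingNetCost cs ct cu cw asu au aut asw aw awt (κ, f, g, l) =
      cs κ + ct l + (chainCost cu (asu κ) au f + aut (f (Fin.last n₁)) l)
        + (chainCost cw (asw κ) aw g + awt (g (Fin.last n₂)) l) := by
  simp only [branchingNetCost, chainCost]
  abel

/-- Regroups an assignment of a branching net as the schemas of its two end layers together with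
those of its two chains. -/
def endsProdChainsEquiv (S T A B : Type*) : (S × T) × (A × B) ≃ S × A × B × T where
  toFun x := (x.1.1, x.2.1, x.2.2, x.1.2)
  invFun σ := ((σ.1, σ.2.2.2), (σ.2.1, σ.2.2.1))

variable [LinearOrder R] [IsOrderedAddMonoid R] [Fintype S] [Nonempty S] [Fintype T] [Nonempty T]
  [∀ j, Fintype (U j)] [∀ j, Nonempty (U j)] [∀ j, Fintype (W j)] [∀ j, Nonempty (W j)]

theorem constrained_dp_branching_net_general (cs : S → R) (ct : T → R) (cu : ∀ j, U j → R)
    (cw : ∀ j, W j → R) (asu : S → U 0 → R) (au : ∀ j : Fin n₁, U j.castSucc → U j.succ → R)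
    (aut : U (Fin.last n₁) → T → R) (asw : S → W 0 → R)
    (aw : ∀ j : Fin n₂, W j.castSucc → W j.succ → R) (awt : W (Fin.last n₂) → T → R)
    (D₁ : S → ∀ j, U j → R) (D₂ : S → ∀ j, W j → R)
    (hD₁ : ∀ κ, IsChainDP cu (asu κ) au (D₁ κ)) (hD₂ : ∀ κ, IsChainDP cw (asw κ) aw (D₂ κ)) :
    univ.inf' univ_nonempty (branchingNetCost cs ct cu cw asu au aut asw aw awt) =
      univ.inf' univ_nonempty fun p : S × T =>
        cs p.1 + ct p.2
          + (univ.inf' univ_nonempty fun μ => D₁ p.1 (Fin.last n₁) μ + aut μ p.2)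
          + univ.inf' univ_nonempty fun ν => D₂ p.1 (Fin.last n₂) ν + awt ν p.2 := by
  rw [univ_inf'_eq_inf'_inf' (endsProdChainsEquiv ..)]
  refine inf'_congr _ rfl fun ⟨κ, l⟩ _ => ?_
  calc
    _ = univ.inf' univ_nonempty fun x : (∀ j, U j) × (∀ j, W j) =>
          cs κ + ct l + ((chainCost cu (asu κ) au x.1 + aut (x.1 (Fin.last n₁)) l)
            + (chainCost cw (asw κ) aw x.2 + awt (x.2 (Fin.last n₂)) l)) := by
        simp only [endsProdChainsEquiv, Equiv.coe_fn_mk,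
          branchingNetCost_eq_chainCost_add_chainCost, add_assoc]
    _ = cs κ + ct l
          + ((univ.inf' univ_nonempty fun f => chainCost cu (asu κ) au f + aut (f (Fin.last n₁)) l)
            + univ.inf' univ_nonempty fun g =>
                chainCost cw (asw κ) aw g + awt (g (Fin.last n₂)) l) := by
        rw [univ_inf'_add_univ_inf', const_add_inf']
    _ = _ := by
        rw [(hD₁ κ).inf'_chainCost_add (aut · l), (hD₂ κ).inf'_chainCost_add (awt · l), ← add_assoc]

end BranchingNet

/-- **Proposition 2 (optimality of constrained DP) for a branching net.**
The net has a source `s`, two internally disjoint chains `u_0, …, u_{m₁-1}` and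
`w_0, …, w_{m₂-1}`, and a sink `t`, with edges `s→u_0, u_0→u_1, …, u_{m₁-1}→t`
and `s→w_0, …, w_{m₂-1}→t`.  An assignment is a tuple `(κ, f, g, l)` of schemas
for `s`, the `u`-chain, the `w`-chain, and `t`; its cost is the sum of all
vertex costs plus all edge adapt costs.  `D₁ j μ κ` (resp. `D₂`) is the
constrained DP value of the `u`-chain (resp. `w`-chain) prefix ending at index
`j` with schema `μ`, subject to the constraint that `s` has schema `κ` (the cost
`cs κ` of `s` itself not included).  The global minimum cost equals
`min_{κ,l} [cs κ + ct l + min_μ (D₁ last μ κ + aut μ l) + min_ν (D₂ last ν κ + awt ν l)]`. -/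
theorem constrained_dp_branching_net (Λ : Type*) [Fintype Λ] [Nonempty Λ]
    {m₁ m₂ : ℕ} (hm₁ : 1 ≤ m₁) (hm₂ : 1 ≤ m₂)
    (cs ct : Λ → ℝ) (cu : Fin m₁ → Λ → ℝ) (cw : Fin m₂ → Λ → ℝ)
    (asu : Λ → Λ → ℝ) (au : Fin (m₁ - 1) → Λ → Λ → ℝ) (aut : Λ → Λ → ℝ)
    (asw : Λ → Λ → ℝ) (aw : Fin (m₂ - 1) → Λ → Λ → ℝ) (awt : Λ → Λ → ℝ)
    (D₁ : Fin m₁ → Λ → Λ → ℝ) (D₂ : Fin m₂ → Λ → Λ → ℝ)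
    (hD₁0 : ∀ μ κ : Λ, D₁ ⟨0, by omega⟩ μ κ = cu ⟨0, by omega⟩ μ + asu κ μ)
    (hD₁s : ∀ (j : Fin (m₁ - 1)) (μ κ : Λ),
      D₁ ⟨j.val + 1, by have := j.isLt; omega⟩ μ κ
        = cu ⟨j.val + 1, by have := j.isLt; omega⟩ μ
          + Finset.univ.inf' Finset.univ_nonempty
              (fun ν : Λ => D₁ ⟨j.val, by have := j.isLt; omega⟩ ν κ + au j ν μ))
    (hD₂0 : ∀ μ κ : Λ, D₂ ⟨0, by omega⟩ μ κ = cw ⟨0, by omega⟩ μ + asw κ μ)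
    (hD₂s : ∀ (j : Fin (m₂ - 1)) (μ κ : Λ),
      D₂ ⟨j.val + 1, by have := j.isLt; omega⟩ μ κ
        = cw ⟨j.val + 1, by have := j.isLt; omega⟩ μ
          + Finset.univ.inf' Finset.univ_nonempty
              (fun ν : Λ => D₂ ⟨j.val, by have := j.isLt; omega⟩ ν κ + aw j ν μ)) :
    Finset.univ.inf' Finset.univ_nonempty
        (fun σ : Λ × (Fin m₁ → Λ) × (Fin m₂ → Λ) × Λ =>
          cs σ.1 + ct σ.2.2.2
            + (∑ j : Fin m₁, cu j (σ.2.1 j)) + (∑ j : Fin m₂, cw j (σ.2.2.1 j))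
            + asu σ.1 (σ.2.1 ⟨0, by omega⟩)
            + (∑ j : Fin (m₁ - 1),
                au j (σ.2.1 ⟨j.val, by have := j.isLt; omega⟩)
                     (σ.2.1 ⟨j.val + 1, by have := j.isLt; omega⟩))
            + aut (σ.2.1 ⟨m₁ - 1, by omega⟩) σ.2.2.2
            + asw σ.1 (σ.2.2.1 ⟨0, by omega⟩)
            + (∑ j : Fin (m₂ - 1),
                aw j (σ.2.2.1 ⟨j.val, by have := j.isLt; omega⟩)
                     (σ.2.2.1 ⟨j.val + 1, by have := j.isLt; omega⟩))
            + awt (σ.2.2.1 ⟨m₂ - 1, by omega⟩) σ.2.2.2)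
      = Finset.univ.inf' Finset.univ_nonempty
          (fun p : Λ × Λ =>
            cs p.1 + ct p.2
              + Finset.univ.inf' Finset.univ_nonempty
                  (fun μ : Λ => D₁ ⟨m₁ - 1, by omega⟩ μ p.1 + aut μ p.2)
              + Finset.univ.inf' Finset.univ_nonempty
                  (fun ν : Λ => D₂ ⟨m₂ - 1, by omega⟩ ν p.1 + awt ν p.2)) := by
  obtain ⟨n₁, rfl⟩ := Nat.exists_eq_add_of_le' hm₁
  obtain ⟨n₂, rfl⟩ := Nat.exists_eq_add_of_le' hm₂
  exact constrained_dp_branching_net_general cs ct cu cw asu au aut asw aw awt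
    (fun κ j μ => D₁ j μ κ) (fun κ j μ => D₂ j μ κ)
    (fun κ => ⟨(hD₁0 · κ), (hD₁s · · κ)⟩) (fun κ => ⟨(hD₂0 · κ), (hD₂s · · κ)⟩)
end

section
/- Let V be a finite type, Λ a finite nonempty type, c : V → Λ → ℝ vertex costs, and let the edge set be partitioned into finite sets E_1, …, E_k with adapt costs a_e : Λ → Λ → ℝ for each edge e. Let A_1, …, A_k ⊆ V satisfy ⋃_m A_m = V, every edge in E_m has both endpoints in A_m, and A_m ∩ A_{m'} = C for all m ≠ m', for a fixed set C ⊆ V. Then for every τ : C → Λ, the minimum over all σ : V → Λ with σ|_C = τ of [Σ_{v ∈ V} c_v(σ v) + Σ_m Σ_{(u,w) ∈ E_m} a_{(u,w)}(σ u, σ w)] equals Σ_{v ∈ C} c_v(τ v) + Σ_{m=1}^{k} [min over σ_m : A_m → Λ with σ_m|_C = τ of (Σ_{v ∈ A_m \ C} c_v(σ_m v) + Σ_{(u,w) ∈ E_m} a_{(u,w)}(σ_m u, σ_m w))]. -/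
/-!
Restricting `σ` to the branches `A m` identifies the assignments on `V` extending `τ` with the
families of branch assignments that each extend `τ`: such a family agrees on the overlaps, which
lie in `C`, and hence glues. Since `V` is the disjoint union of `C` and the sets `A m \ C`, the
cost of `σ` is a constant plus the sum of the branch costs of its restrictions. The set of
attainable total costs is therefore a translate of the Minkowski sum of the sets of attainable
branch costs, and greatest lower bounds are additive under Minkowski sums.
-/

open scoped Pointwise

section OrderedGroup

variable {ι G : Type*} [AddCommGroup G] [Preorder G] [IsOrderedAddMonoid G]

lemma isGLB_finsetSum (t : Finset ι) {S : ι → Set G} {g : ι → G}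
    (hS : ∀ i ∈ t, IsGLB (S i) (g i)) : IsGLB (∑ i ∈ t, S i) (∑ i ∈ t, g i) := by
  induction t using Finset.cons_induction with
  | empty => exact isGLB_singleton
  | cons i t hi ih =>
    rw [Finset.forall_mem_cons] at hS
    rw [Finset.sum_cons, Finset.sum_cons]
    exact hS.1.add (ih hS.2)

lemma isGLB_image_sum_univ_pi [Fintype ι] {X : ι → Type*} {T : ∀ i, Set (X i)}
    {F : ∀ i, X i → G} {g : ι → G} (hF : ∀ i, IsGLB (F i '' T i) (g i)) :
    IsGLB ((fun x : ∀ i, X i => ∑ i, F i (x i)) '' Set.univ.pi T) (∑ i, g i) := by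
  have himage : (fun x : ∀ i, X i => ∑ i, F i (x i)) '' Set.univ.pi T = ∑ i, F i '' T i := by
    rw [← Set.image_fintype_sum_pi, ← Set.piMap_image_univ_pi, Set.image_image]
    rfl
  rw [himage]
  exact isGLB_finsetSum _ fun i _ => hF i

end OrderedGroup

section Restriction

variable {V : Type*} {Λ : V → Type*}

lemma finset_restrict_surjective [∀ v, Nonempty (Λ v)] (C : Finset V) :
    Function.Surjective (C.restrict (π := Λ)) := by
  classical
  exact fun τ => ⟨fun v => if h : v ∈ C then τ ⟨v, h⟩ else Classical.arbitrary _,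
    funext fun v => dif_pos v.2⟩

lemma finset_restrict₂_surjective [∀ v, Nonempty (Λ v)] {C B : Finset V} (hCB : C ⊆ B) :
    Function.Surjective (Finset.restrict₂ (π := Λ) hCB) :=
  .of_comp (g := B.restrict) (finset_restrict_surjective C)

variable [DecidableEq V] {ι : Type*} {A : ι → Finset V} {C : Finset V}

lemma exists_restrict_eq_of_restrict₂_eq (hcover : ∀ v, ∃ m, v ∈ A m)
    (hint : Pairwise fun m m' => A m ∩ A m' ⊆ C) (hCsub : ∀ m, C ⊆ A m) {τ : ∀ v : C, Λ v}
    {s : ∀ m, ∀ v : A m, Λ v} (hs : ∀ m, Finset.restrict₂ (hCsub m) (s m) = τ) :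
    ∃ σ : ∀ v, Λ v, C.restrict σ = τ ∧ ∀ m, (A m).restrict σ = s m := by
  choose i hi using hcover
  refine ⟨fun v => s (i v) ⟨v, hi v⟩, funext fun v => congrFun (hs (i v)) v,
    fun m => funext fun ⟨v, hv⟩ => ?_⟩
  change s (i v) ⟨v, hi v⟩ = s m ⟨v, hv⟩
  obtain rfl | hne := eq_or_ne (i v) m
  · rfl
  · have hvC : v ∈ C := hint hne (Finset.mem_inter.mpr ⟨hi v, hv⟩)
    exact congrFun ((hs (i v)).trans (hs m).symm) ⟨v, hvC⟩

lemma image_restrict_eq_univ_pi (hcover : ∀ v, ∃ m, v ∈ A m)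
    (hint : Pairwise fun m m' => A m ∩ A m' ⊆ C) (hCsub : ∀ m, C ⊆ A m) (τ : ∀ v : C, Λ v) :
    (fun (σ : ∀ v, Λ v) m => (A m).restrict σ) '' {σ | C.restrict σ = τ} =
      Set.univ.pi fun m => {s | Finset.restrict₂ (hCsub m) s = τ} := by
  ext s
  constructor
  · rintro ⟨σ, hσ, rfl⟩ m -
    exact hσ
  · intro hs
    obtain ⟨σ, hσ, hres⟩ :=
      exists_restrict_eq_of_restrict₂_eq hcover hint hCsub fun m => hs m (Set.mem_univ m)
    exact ⟨σ, hσ, funext hres⟩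

lemma sum_univ_eq_sum_add_sum_sdiff {M : Type*} [AddCommMonoid M] [Fintype V] [Fintype ι]
    (hcover : ∀ v, ∃ m, v ∈ A m) (hint : Pairwise fun m m' => A m ∩ A m' ⊆ C) (f : V → M) :
    ∑ v, f v = ∑ v ∈ C, f v + ∑ m, ∑ v ∈ A m \ C, f v := by
  have hdisj : Set.PairwiseDisjoint (Finset.univ : Finset ι) fun m => A m \ C := by
    refine fun m _ m' _ hne => Finset.disjoint_left.mpr fun v hv hv' => ?_
    rw [Finset.mem_sdiff] at hv hv'
    exact hv.2 (hint hne (Finset.mem_inter.mpr ⟨hv.1, hv'.1⟩))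
  have hcompl : Finset.univ.biUnion (fun m => A m \ C) = Cᶜ := by
    ext v
    simp [hcover v]
  rw [← Finset.sum_biUnion hdisj, hcompl, Finset.sum_add_sum_compl]

end Restriction

section Cost

variable {V ι R : Type*} {Λ : V → Type*} [AddCommMonoid R]

/-- The cost of an assignment of schemas to all layers of a net whose edges come in groups `E m`.
The schemas available may vary with the layer. -/
def netCost [Fintype V] [Fintype ι] (c : ∀ v, Λ v → R) (a : ∀ e : V × V, Λ e.1 → Λ e.2 → R)
    (E : ι → Finset (V × V)) (σ : ∀ v, Λ v) : R :=
  ∑ v, c v (σ v) + ∑ m, ∑ e ∈ E m, a e (σ e.1) (σ e.2)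

/-- The cost of an assignment on a single branch with layers `B` and edges `D`. The layers in `C`
are not charged, since they are shared between the branches. -/
def branchCost [DecidableEq V] (c : ∀ v, Λ v → R) (a : ∀ e : V × V, Λ e.1 → Λ e.2 → R)
    (C : Finset V) {B : Finset V} {D : Finset (V × V)} (hD : ∀ e ∈ D, e.1 ∈ B ∧ e.2 ∈ B)
    (s : ∀ v : B, Λ v) : R :=
  ∑ v ∈ (B \ C).attach, c v.1 (s ⟨v.1, (Finset.mem_sdiff.mp v.2).1⟩) +
    ∑ e ∈ D.attach, a e.1 (s ⟨e.1.1, (hD e.1 e.2).1⟩) (s ⟨e.1.2, (hD e.1 e.2).2⟩)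

variable [DecidableEq V] (c : ∀ v, Λ v → R) (a : ∀ e : V × V, Λ e.1 → Λ e.2 → R)

lemma branchCost_restrict (C : Finset V) {B : Finset V} {D : Finset (V × V)}
    (hD : ∀ e ∈ D, e.1 ∈ B ∧ e.2 ∈ B) (σ : ∀ v, Λ v) :
    branchCost c a C hD (B.restrict σ) =
      ∑ v ∈ B \ C, c v (σ v) + ∑ e ∈ D, a e (σ e.1) (σ e.2) :=
  congrArg₂ (· + ·) (Finset.sum_attach (B \ C) fun v => c v (σ v))
    (Finset.sum_attach D fun e => a e (σ e.1) (σ e.2))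

lemma netCost_eq_add_sum_branchCost [Fintype V] [Fintype ι] {E : ι → Finset (V × V)}
    {A : ι → Finset V} {C : Finset V} (hcover : ∀ v, ∃ m, v ∈ A m)
    (hend : ∀ m, ∀ e ∈ E m, e.1 ∈ A m ∧ e.2 ∈ A m)
    (hint : Pairwise fun m m' => A m ∩ A m' ⊆ C) (σ : ∀ v, Λ v) :
    netCost c a E σ = ∑ v ∈ C.attach, c v.1 (C.restrict σ v) +
      ∑ m, branchCost c a C (hend m) ((A m).restrict σ) := by
  have hC : ∑ v ∈ C.attach, c v.1 (C.restrict σ v) = ∑ v ∈ C, c v (σ v) :=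
    Finset.sum_attach C fun v => c v (σ v)
  simp only [netCost, branchCost_restrict, Finset.sum_add_distrib, hC,
    sum_univ_eq_sum_add_sum_sdiff hcover hint, add_assoc]

end Cost

section Merge

variable {V ι R : Type*} {Λ : V → Type*} [Fintype V] [DecidableEq V] [Fintype ι] [AddCommGroup R]
  (c : ∀ v, Λ v → R) (a : ∀ e : V × V, Λ e.1 → Λ e.2 → R) {E : ι → Finset (V × V)}
  {A : ι → Finset V} {C : Finset V}

lemma isGLB_image_netCost [Preorder R] [IsOrderedAddMonoid R]
    (hcover : ∀ v, ∃ m, v ∈ A m) (hend : ∀ m, ∀ e ∈ E m, e.1 ∈ A m ∧ e.2 ∈ A m)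
    (hint : Pairwise fun m m' => A m ∩ A m' ⊆ C) (hCsub : ∀ m, C ⊆ A m) {τ : ∀ v : C, Λ v}
    {g : ι → R} (hg : ∀ m,
      IsGLB (branchCost c a C (hend m) '' {s | Finset.restrict₂ (hCsub m) s = τ}) (g m)) :
    IsGLB (netCost c a E '' {σ | C.restrict σ = τ})
      (∑ v ∈ C.attach, c v.1 (τ v) + ∑ m, g m) := by
  have himage : netCost c a E '' {σ | C.restrict σ = τ} =
      {∑ v ∈ C.attach, c v.1 (τ v)} +
        (fun s : ∀ m, ∀ v : A m, Λ v => ∑ m, branchCost c a C (hend m) (s m)) ''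
          Set.univ.pi fun m => {s | Finset.restrict₂ (hCsub m) s = τ} := by
    rw [← image_restrict_eq_univ_pi hcover hint hCsub, Set.image_image, Set.singleton_add,
      Set.image_image]
    refine Set.image_congr fun σ hσ => ?_
    rw [netCost_eq_add_sum_branchCost c a hcover hend hint, hσ]
  rw [himage]
  exact isGLB_singleton.add (isGLB_image_sum_univ_pi hg)

theorem dprs_merge_decomposition_general [∀ v, Nonempty (Λ v)] [ConditionallyCompleteLattice R]
    [IsOrderedAddMonoid R] (hcover : ∀ v, ∃ m, v ∈ A m)
    (hend : ∀ m, ∀ e ∈ E m, e.1 ∈ A m ∧ e.2 ∈ A m)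
    (hint : Pairwise fun m m' => A m ∩ A m' ⊆ C) (hCsub : ∀ m, C ⊆ A m) (τ : ∀ v : C, Λ v)
    (hbdd : ∀ m,
      BddBelow (branchCost c a C (hend m) '' {s | Finset.restrict₂ (hCsub m) s = τ})) :
    sInf (netCost c a E '' {σ | C.restrict σ = τ}) =
      ∑ v ∈ C.attach, c v.1 (τ v) +
        ∑ m, sInf (branchCost c a C (hend m) '' {s | Finset.restrict₂ (hCsub m) s = τ}) := by
  have hbranch m := isGLB_csInf (.image _ (finset_restrict₂_surjective (hCsub m) τ)) (hbdd m)
  exact (isGLB_image_netCost c a hcover hend hint hCsub hbranch).csInf_eq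
    (.image _ (finset_restrict_surjective C τ))

end Merge

/-- **Decomposition lemma for the merge step of DPRS.**  The edge set of the net
is partitioned into finite sets `E m` (`m : Fin k`) with adapt costs `a e`, and
the vertex sets `A m` cover `V`, contain the endpoints of the respective edges,
and pairwise intersect exactly in a common constrained set `C ⊆ A m`.  Then for
every constraint `τ : C → Λ`, the constrained minimum of the total cost over
`σ : V → Λ` with `σ|_C = τ` splits into the cost of `C` plus the sum over `m` of
the independent constrained minima over the parts `A m`. -/
theorem dprs_merge_decomposition (V : Type*) [Fintype V] [DecidableEq V]
    (Λ : Type*) [Fintype Λ] [Nonempty Λ]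
    (c : V → Λ → ℝ) {k : ℕ}
    (E : Fin k → Finset (V × V))
    (hEdisj : ∀ m m' : Fin k, m ≠ m' → Disjoint (E m) (E m'))
    (a : V × V → Λ → Λ → ℝ)
    (A : Fin k → Finset V) (C : Finset V)
    (hcover : ∀ v : V, ∃ m : Fin k, v ∈ A m)
    (hend : ∀ (m : Fin k), ∀ e ∈ E m, e.1 ∈ A m ∧ e.2 ∈ A m)
    (hint : ∀ m m' : Fin k, m ≠ m' → A m ∩ A m' = C)
    (hCsub : ∀ m : Fin k, C ⊆ A m) :
    ∀ τ : {x // x ∈ C} → Λ,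
      sInf {x : ℝ | ∃ σ : V → Λ, (∀ v : {x // x ∈ C}, σ v.1 = τ v) ∧
          x = (∑ v : V, c v (σ v))
            + ∑ m : Fin k, ∑ e ∈ E m, a e (σ e.1) (σ e.2)}
        = (∑ v ∈ C.attach, c v.1 (τ v))
          + ∑ m : Fin k,
              sInf {x : ℝ | ∃ σm : {v // v ∈ A m} → Λ,
                (∀ v : {x // x ∈ C}, σm ⟨v.1, hCsub m v.2⟩ = τ v) ∧
                x = (∑ v ∈ (A m \ C).attach,
                      c v.1 (σm ⟨v.1, (Finset.mem_sdiff.mp v.2).1⟩))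
                  + ∑ e ∈ (E m).attach,
                      a e.1 (σm ⟨e.1.1, (hend m e.1 e.2).1⟩)
                            (σm ⟨e.1.2, (hend m e.1 e.2).2⟩)} := by
  intro τ
  simpa only [netCost, branchCost, Set.image, Set.mem_ofPred_eq, funext_iff, Finset.restrict,
    Finset.restrict₂, @eq_comm ℝ] using
    dprs_merge_decomposition_general c a hcover hend (fun m m' hne => (hint m m' hne).subset)
      hCsub τ fun m => (Set.toFinite _).bddBelow
end

section
/- Let n ≥ 1 and let E : Fin n → Fin n → Prop be a directed edge relation such that E u v implies u < v (so the graph is a DAG in topological order). Let t : Fin n and assume every vertex has a directed path to t. Let i, j : Fin n with i ≠ j, and assume every directed path from i to t passes through j. Let B = { v : Fin n | v lies on some directed path from i to j }. Then for every edge (u, w) with E u w, if u ∈ B and u ≠ j, then w ∈ B. -/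
/-- A directed path from `x` to `y` along the edge relation `E`: a nonempty list
of vertices whose consecutive members are joined by edges, starting at `x` and
ending at `y`. -/
def DirPath {n : ℕ} (E : Fin n → Fin n → Prop) (x y : Fin n)
    (p : List (Fin n)) : Prop :=
  p.Chain' E ∧ p.head? = some x ∧ p.getLast? = some y

/-!
Let `u ≠ j` lie on a path from `i` to `j`, and let `E u w`. Follow that path up to `u`, step to
`w`, and continue along a path from `w` to `t`; the result must contain `j`. If `j` occurred up to
`u`, then going on from `u` to `j` would close a cycle at `j`. Hence `j` occurs after the step, and
stopping there gives a path from `i` to `j` through `w`.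
-/

open Relation

/-- Directed paths from `x` to `y` along a relation on an arbitrary type, encoded as vertex lists;
the clauses are those of `DirPath`, so that on `Fin n` the two notions unfold to the same
proposition. -/
def RelPath {α : Type*} (E : α → α → Prop) (x y : α) (p : List α) : Prop :=
  p.IsChain E ∧ p.head? = some x ∧ p.getLast? = some y

namespace RelPath

variable {α : Type*} {E : α → α → Prop} {x y u v w : α} {p q : List α}

theorem source_mem (hp : RelPath E x y p) : x ∈ p :=
  List.mem_of_head? hp.2.1

theorem append (hp : RelPath E x u p) (huw : E u w) (hq : RelPath E w y q) :
    RelPath E x y (p ++ q) := by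
  obtain ⟨p_chain, p_head, p_last⟩ := hp
  obtain ⟨q_chain, q_head, q_last⟩ := hq
  refine ⟨List.isChain_append.2 ⟨p_chain, q_chain, ?_⟩, ?_, ?_⟩
  · simpa [p_last, q_head] using huw
  · simp [p_head]
  · simp [q_last]

theorem exists_split_of_mem (hp : RelPath E x y p) (hv : v ∈ p) :
    ∃ q r, RelPath E x v q ∧ RelPath E v y r := by
  obtain ⟨a, b, rfl⟩ := List.append_of_mem hv
  obtain ⟨p_chain, p_head, p_last⟩ := hp
  obtain ⟨chain_to_v, chain_from_v⟩ := List.isChain_split.1 p_chain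
  refine ⟨a ++ [v], v :: b, ⟨chain_to_v, ?_, List.getLast?_concat⟩, chain_from_v, rfl, ?_⟩
  · simpa only [List.head?_append, List.head?_cons] using p_head
  · rwa [List.getLast?_append_cons] at p_last

theorem reflTransGen (hp : RelPath E x y p) : ReflTransGen E x y := by
  obtain ⟨p_chain, p_head, p_last⟩ := hp
  obtain ⟨b, rfl⟩ := List.head?_eq_some_iff.1 p_head
  exact List.relationReflTransGen_of_exists_isChain_cons b p_chain
    (List.getLast_of_mem_getLast? p_last)

theorem transGen_of_ne (hp : RelPath E x y p) (hxy : x ≠ y) : TransGen E x y :=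
  (reflTransGen_iff_eq_or_transGen.1 hp.reflTransGen).resolve_left hxy.symm

end RelPath

theorem relax_constraint_separation_general {α : Type*} {E : α → α → Prop} {i j t u w : α}
    (hj : ¬ TransGen E j j) (hthrough : ∀ p, RelPath E i t p → j ∈ p)
    (hw : ∃ q, RelPath E w t q) (huw : E u w)
    (hu : ∃ p, RelPath E i j p ∧ u ∈ p) (huj : u ≠ j) :
    ∃ p, RelPath E i j p ∧ w ∈ p := by
  obtain ⟨p, hp, hup⟩ := hu
  obtain ⟨a, _, path_iu, path_uj⟩ := hp.exists_split_of_mem hup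
  obtain ⟨q, path_wt⟩ := hw
  have j_notMem_a : j ∉ a := by
    intro hja
    obtain ⟨_, _, -, path_ju⟩ := path_iu.exists_split_of_mem hja
    exact hj ((path_ju.transGen_of_ne huj.symm).trans (path_uj.transGen_of_ne huj))
  have j_mem_q : j ∈ q :=
    (List.mem_append.1 (hthrough _ (path_iu.append huw path_wt))).resolve_left j_notMem_a
  obtain ⟨d, _, path_wj, -⟩ := path_wt.exists_split_of_mem j_mem_q
  exact ⟨a ++ d, path_iu.append huw path_wj, List.mem_append_right a path_wj.source_mem⟩

/-- **Separation property ('if' direction of Proposition 3).**  In a DAG on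
`Fin n` whose edges respect the topological order, with an output `t` reachable
from every vertex, if every directed path from `i` to `t` passes through `j`
(`i ≠ j`), then the region `B` of vertices lying on some directed path from `i`
to `j` is closed under edges leaving vertices other than `j`: every edge
`(u, w)` with `u ∈ B`, `u ≠ j` satisfies `w ∈ B`. -/
theorem relax_constraint_separation {n : ℕ} (hn : 1 ≤ n)
    (E : Fin n → Fin n → Prop)
    (hE : ∀ u v : Fin n, E u v → u < v)
    (t : Fin n)
    (hreach : ∀ v : Fin n, ∃ p : List (Fin n), DirPath E v t p)
    (i j : Fin n) (hij : i ≠ j)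
    (hthrough : ∀ p : List (Fin n), DirPath E i t p → j ∈ p) :
    ∀ u w : Fin n, E u w →
      (∃ p : List (Fin n), DirPath E i j p ∧ u ∈ p) → u ≠ j →
      ∃ p : List (Fin n), DirPath E i j p ∧ w ∈ p := by
  intro u w huw hu huj
  have j_acyclic : ¬ TransGen E j j := fun cycle => lt_irrefl j (transGen_minimal hE j j cycle)
  exact relax_constraint_separation_general j_acyclic hthrough (hreach w) huw hu huj
end

section
/- Let n ≥ 1 and let E : Fin n → Fin n → Prop be a directed edge relation such that E u v implies u < v. Assume there is a unique sink t (t has no outgoing edge and every other vertex has at least one outgoing edge). Let i, j : Fin n with j ≠ t, and suppose some directed path from i to t avoids j. Then there exist a directed path ρ from i to t that does not contain j, a directed path ρ' from j to t, and a vertex k with j < k such that k lies on both ρ and ρ'. -/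
section

variable {α : Type*} {E : α → α → Prop} {x y t : α} {p : List α}

/-- A directed path from `x` to `y` along a relation `E` on an arbitrary type, encoded as its list
of vertices. On `Fin n` it unfolds to the same proposition as `DirPath`. -/
def IsDirectedPath (E : α → α → Prop) (x y : α) (p : List α) : Prop :=
  p.IsChain E ∧ p.head? = some x ∧ p.getLast? = some y

theorem IsDirectedPath.target_mem (hp : IsDirectedPath E x y p) : y ∈ p :=
  List.mem_of_getLast? hp.2.2

theorem exists_isDirectedPath_of_reflTransGen (hxy : Relation.ReflTransGen E x y) :
    ∃ p, IsDirectedPath E x y p := by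
  obtain ⟨p, hne, hchain, rfl, rfl⟩ := List.exists_isChain_ne_nil_of_relationReflTransGen hxy
  exact ⟨p, hchain, List.head?_eq_some_head hne, List.getLast?_eq_some_getLast hne⟩

theorem reflTransGen_sink_of_wellFounded_swap (hwf : WellFounded (Function.swap E))
    (hout : ∀ v, v ≠ t → ∃ w, E v w) (v : α) : Relation.ReflTransGen E v t := by
  induction v using hwf.induction with
  | _ v ih =>
    obtain rfl | hv := eq_or_ne v t
    · exact .refl
    · obtain ⟨w, hvw⟩ := hout v hv
      exact .head hvw (ih w hvw)

theorem relax_constraint_converse_general (hwf : WellFounded (Function.swap E))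
    (hout : ∀ v, v ≠ t → ∃ w, E v w) {i j : α} (hjt : j ≠ t)
    (havoid : ∃ p, IsDirectedPath E i t p ∧ j ∉ p) :
    ∃ (ρ ρ' : List α) (k : α), IsDirectedPath E i t ρ ∧ j ∉ ρ ∧ IsDirectedPath E j t ρ' ∧
      Relation.TransGen E j k ∧ k ∈ ρ ∧ k ∈ ρ' := by
  -- Edges cannot be followed forever, so `j` reaches `t`, and `t` itself serves as `k`.
  have hreach : Relation.ReflTransGen E j t := reflTransGen_sink_of_wellFounded_swap hwf hout j
  have hdown : Relation.TransGen E j t :=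
    (Relation.reflTransGen_iff_eq_or_transGen.mp hreach).resolve_left hjt.symm
  obtain ⟨ρ, hρ, hjρ⟩ := havoid
  obtain ⟨ρ', hρ'⟩ := exists_isDirectedPath_of_reflTransGen hreach
  exact ⟨ρ, ρ', t, hρ, hjρ, hρ', hdown, hρ.target_mem, hρ'.target_mem⟩

end

/-- **'Only if' direction of Proposition 3.**  In a DAG on `Fin n` whose edges
respect the topological order, with a unique sink `t` (no outgoing edge at `t`,
at least one outgoing edge at every other vertex), if some directed path from
`i` to `t` avoids `j` (`j ≠ t`), then there are a path `ρ` from `i` to `t` not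
containing `j`, a path `ρ'` from `j` to `t`, and a vertex `k > j` lying on both. -/
theorem relax_constraint_converse {n : ℕ} (hn : 1 ≤ n)
    (E : Fin n → Fin n → Prop)
    (hE : ∀ u v : Fin n, E u v → u < v)
    (t : Fin n)
    (ht : ∀ w : Fin n, ¬ E t w)
    (hout : ∀ v : Fin n, v ≠ t → ∃ w : Fin n, E v w)
    (i j : Fin n) (hjt : j ≠ t)
    (havoid : ∃ p : List (Fin n), DirPath E i t p ∧ j ∉ p) :
    ∃ (ρ ρ' : List (Fin n)) (k : Fin n),
      DirPath E i t ρ ∧ j ∉ ρ ∧ DirPath E j t ρ' ∧ j < k ∧ k ∈ ρ ∧ k ∈ ρ' := by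
  have hwf : WellFounded (Function.swap E) := Subrelation.wf (hE _ _) wellFounded_gt
  obtain ⟨ρ, ρ', k, hρ, hjρ, hρ', hjk, hk⟩ := relax_constraint_converse_general hwf hout hjt havoid
  exact ⟨ρ, ρ', k, hρ, hjρ, hρ', Relation.transGen_minimal hE j k hjk, hk⟩
end

section
/- Let V be a finite type, Λ a finite nonempty type, c : V → Λ → ℝ vertex costs, and let the edge set be E_A ∪ E_B (disjoint finite sets) with adapt costs a_e : Λ → Λ → ℝ. Let A, B ⊆ V satisfy A ∪ B = V and A ∩ B = {v₀} for a vertex v₀, with every edge of E_A having both endpoints in A and every edge of E_B having both endpoints in B. Then the minimum over all σ : V → Λ of [Σ_{u ∈ V} c_u(σ u) + Σ_{e ∈ E_A ∪ E_B} a_e(σ(src e), σ(tgt e))] equals min over λ ∈ Λ of [f(λ) + g(λ)], where f(λ) = min over σ_A : A → Λ with σ_A(v₀) = λ of (Σ_{u ∈ A} c_u(σ_A u) + Σ_{e ∈ E_A} a_e) and g(λ) = min over σ_B : B → Λ with σ_B(v₀) = λ of (Σ_{u ∈ B \ {v₀}} c_u(σ_B u) + Σ_{e ∈ E_B} a_e).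 -/
/-!
Since `A ∪ B = V` and `A ∩ B = {v₀}`, restriction identifies global assignments with pairs of
assignments on `A` and on `B` having the same label at `v₀`, that is, with a fibre product over `Λ`.
The total cost is the sum of a cost of the first component and a cost of the second. On the fibre
over a label the two components vary independently, so the infimum of the sum is the sum of the
infima there, and the infimum over the whole fibre product is the infimum of the fibrewise ones.
-/

open Function
open scoped Pointwise

section Infimum

theorem csInf_iUnion {ι M : Type*} [Nonempty ι] [ConditionallyCompleteLattice M] {s : ι → Set M}
    (hne : ∀ i, (s i).Nonempty) (hbdd : BddBelow (⋃ i, s i)) :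
    sInf (⋃ i, s i) = ⨅ i, sInf (s i) := by
  have isGLB_each (i : ι) : IsGLB (s i) (sInf (s i)) :=
    isGLB_csInf (hne i) (hbdd.mono (Set.subset_iUnion s i))
  have isGLB_all : IsGLB (⋃ i, s i) (sInf (⋃ i, s i)) :=
    isGLB_csInf (Set.nonempty_iUnion.mpr ⟨Classical.arbitrary ι, hne _⟩) hbdd
  exact ((isGLB_iUnion_iff_of_isGLB isGLB_each _).mpr isGLB_all).ciInf_eq.symm

theorem sInf_setOf_exists_eq {S M : Type*} [InfSet M] (f : S → M) :
    sInf {x | ∃ s, x = f s} = ⨅ s, f s := by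
  simp only [iInf, Set.range, eq_comm]

theorem sInf_setOf_exists_and_eq {S M : Type*} [InfSet M] (P : S → Prop) (f : S → M) :
    sInf {x | ∃ s, P s ∧ x = f s} = ⨅ s : {s // P s}, f s := by
  simp only [iInf, Set.range, Subtype.exists, exists_prop, eq_comm]

theorem bddBelow_left_of_bddBelow_add {M : Type*} [AddGroup M] [Preorder M] [AddRightMono M]
    {s t : Set M} (ht : t.Nonempty) (h : BddBelow (s + t)) : BddBelow s := by
  obtain ⟨m, hm⟩ := h
  obtain ⟨y, hy⟩ := ht
  exact ⟨m - y, fun x hx => sub_le_iff_le_add.mpr (hm (Set.add_mem_add hx hy))⟩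

theorem bddBelow_right_of_bddBelow_add {M : Type*} [AddGroup M] [Preorder M] [AddLeftMono M]
    {s t : Set M} (hs : s.Nonempty) (h : BddBelow (s + t)) : BddBelow t := by
  obtain ⟨m, hm⟩ := h
  obtain ⟨x, hx⟩ := hs
  exact ⟨-x + m, fun y hy => neg_add_le_iff_le_add.mpr (hm (Set.add_mem_add hx hy))⟩

theorem range_pullback_add {S T Λ M : Type*} [Add M] (p : S → Λ) (q : T → Λ) (f : S → M)
    (g : T → M) :
    Set.range (fun x : p.Pullback q => f x.fst + g x.snd) =
      ⋃ l, (Set.range (fun s : {s // p s = l} => f s) +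
        Set.range fun t : {t // q t = l} => g t) := by
  ext x
  simp only [Set.mem_iUnion, Set.mem_add, Set.mem_range]
  constructor
  · rintro ⟨⟨⟨s, t⟩, hst⟩, rfl⟩
    exact ⟨q t, f s, ⟨⟨s, hst⟩, rfl⟩, g t, ⟨⟨t, rfl⟩, rfl⟩, rfl⟩
  · rintro ⟨l, _, ⟨⟨s, hs⟩, rfl⟩, _, ⟨⟨t, ht⟩, rfl⟩, rfl⟩
    exact ⟨⟨(s, t), hs.trans ht.symm⟩, rfl⟩

theorem ciInf_pullback_add {S T Λ M : Type*} [Nonempty Λ] [AddGroup M]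
    [ConditionallyCompleteLattice M] [AddLeftMono M] [AddRightMono M]
    {p : S → Λ} {q : T → Λ} (hp : Surjective p) (hq : Surjective q) {f : S → M} {g : T → M}
    (hbdd : BddBelow (Set.range fun x : p.Pullback q => f x.fst + g x.snd)) :
    ⨅ x : p.Pullback q, (f x.fst + g x.snd) =
      ⨅ l, ((⨅ s : {s // p s = l}, f s) + ⨅ t : {t // q t = l}, g t) := by
  let F (l : Λ) : Set M := Set.range fun s : {s // p s = l} => f s
  let G (l : Λ) : Set M := Set.range fun t : {t // q t = l} => g t
  have hF (l : Λ) : (F l).Nonempty := let ⟨s, hs⟩ := hp l; ⟨f s, ⟨s, hs⟩, rfl⟩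
  have hG (l : Λ) : (G l).Nonempty := let ⟨t, ht⟩ := hq l; ⟨g t, ⟨t, ht⟩, rfl⟩
  have hunion : BddBelow (⋃ l, (F l + G l)) := range_pullback_add p q f g ▸ hbdd
  have hfibre (l : Λ) : BddBelow (F l + G l) := hunion.mono (Set.subset_iUnion_of_subset l le_rfl)
  calc ⨅ x : p.Pullback q, (f x.fst + g x.snd)
      = sInf (⋃ l, (F l + G l)) := congrArg sInf (range_pullback_add p q f g)
    _ = ⨅ l, sInf (F l + G l) := csInf_iUnion (fun l => (hF l).add (hG l)) hunion
    _ = ⨅ l, (sInf (F l) + sInf (G l)) := iInf_congr fun l =>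
        csInf_add (hF l) (bddBelow_left_of_bddBelow_add (hG l) (hfibre l))
          (hG l) (bddBelow_right_of_bddBelow_add (hF l) (hfibre l))

end Infimum

theorem exists_restrict_eq_of_agree_on_inter {V : Type*} {π : V → Type*} {A B : Finset V}
    (hcover : ∀ u, u ∈ A ∨ u ∈ B) (σA : ∀ u : A, π u) (σB : ∀ u : B, π u)
    (hagree : ∀ u (hA : u ∈ A) (hB : u ∈ B), σA ⟨u, hA⟩ = σB ⟨u, hB⟩) :
    ∃ σ : ∀ u, π u, A.restrict σ = σA ∧ B.restrict σ = σB := by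
  classical
  refine ⟨fun u => if hA : u ∈ A then σA ⟨u, hA⟩ else σB ⟨u, (hcover u).resolve_left hA⟩, ?_, ?_⟩
  · funext ⟨u, hA⟩
    exact dif_pos hA
  · funext ⟨u, hB⟩
    by_cases hA : u ∈ A
    · exact (dif_pos hA).trans (hagree u hA hB)
    · exact dif_neg hA

section Cut

variable {V Λ M : Type*}

/-- The restrictions of a global assignment to two parts sharing `v₀`, as a point of the fibre
product of the partial assignments over the label at `v₀`. -/
def restrictAtCut {A B : Finset V} {v₀ : V} (hA : v₀ ∈ A) (hB : v₀ ∈ B) (σ : V → Λ) :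
    (fun σA : A → Λ => σA ⟨v₀, hA⟩).Pullback (fun σB : B → Λ => σB ⟨v₀, hB⟩) :=
  ⟨(A.restrict σ, B.restrict σ), rfl⟩

theorem restrictAtCut_surjective [Fintype V] [DecidableEq V] {A B : Finset V} {v₀ : V}
    (hunion : A ∪ B = Finset.univ) (hinter : A ∩ B = {v₀}) (hA : v₀ ∈ A) (hB : v₀ ∈ B) :
    Surjective (restrictAtCut (Λ := Λ) hA hB) := by
  rintro ⟨⟨σA, σB⟩, hcut⟩
  have hcover (u : V) : u ∈ A ∨ u ∈ B := Finset.mem_union.mp (hunion ▸ Finset.mem_univ u)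
  have hagree (u : V) (huA : u ∈ A) (huB : u ∈ B) : σA ⟨u, huA⟩ = σB ⟨u, huB⟩ := by
    obtain rfl : u = v₀ := Finset.mem_singleton.mp (hinter ▸ Finset.mem_inter.mpr ⟨huA, huB⟩)
    exact hcut
  obtain ⟨σ, rfl, rfl⟩ :=
    exists_restrict_eq_of_agree_on_inter (π := fun _ => Λ) hcover σA σB hagree
  exact ⟨σ, rfl⟩

variable [AddCommMonoid M] (c : V → Λ → M) (a : V × V → Λ → Λ → M)

/-- The cost of a global assignment `σ`, counting only the layers in `U` and the edges in `E`. -/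
def assignmentCost (U : Finset V) (E : Finset (V × V)) (σ : V → Λ) : M :=
  ∑ u ∈ U, c u (σ u) + ∑ e ∈ E, a e (σ e.1) (σ e.2)

/-- The cost of an assignment `σ` on the part `P`, counting the layers in `U` and the edges in `E`.
The set `U` is kept separate from `P` so that a layer shared by two parts can be charged to only one
of them. -/
def partialCost {P U : Finset V} {E : Finset (V × V)} (hU : U ⊆ P)
    (hE : ∀ e ∈ E, e.1 ∈ P ∧ e.2 ∈ P) (σ : P → Λ) : M :=
  ∑ u ∈ U.attach, c u.1 (σ ⟨u.1, hU u.2⟩) +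
    ∑ e ∈ E.attach, a e.1 (σ ⟨e.1.1, (hE e.1 e.2).1⟩) (σ ⟨e.1.2, (hE e.1 e.2).2⟩)

theorem partialCost_restrict {P U : Finset V} {E : Finset (V × V)} (hU : U ⊆ P)
    (hE : ∀ e ∈ E, e.1 ∈ P ∧ e.2 ∈ P) (σ : V → Λ) :
    partialCost c a hU hE (P.restrict σ) = assignmentCost c a U E σ :=
  congrArg₂ (· + ·) (U.sum_attach fun u => c u (σ u))
    (E.sum_attach fun e => a e (σ e.1) (σ e.2))

theorem assignmentCost_union [DecidableEq V] {U W : Finset V} {E F : Finset (V × V)}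
    (hUW : Disjoint U W) (hEF : Disjoint E F) (σ : V → Λ) :
    assignmentCost c a (U ∪ W) (E ∪ F) σ =
      assignmentCost c a U E σ + assignmentCost c a W F σ := by
  simp only [assignmentCost, Finset.sum_union hUW, Finset.sum_union hEF, add_add_add_comm]

theorem assignmentCost_univ_eq_partialCost_add [Fintype V] [DecidableEq V]
    {EA EB : Finset (V × V)} (hEdisj : Disjoint EA EB) {A B : Finset V} {v₀ : V}
    (hunion : A ∪ B = Finset.univ) (hinter : A ∩ B = {v₀})
    (hEA : ∀ e ∈ EA, e.1 ∈ A ∧ e.2 ∈ A) (hEB : ∀ e ∈ EB, e.1 ∈ B ∧ e.2 ∈ B) (σ : V → Λ) :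
    assignmentCost c a Finset.univ (EA ∪ EB) σ =
      partialCost c a (Finset.Subset.refl A) hEA (A.restrict σ) +
        partialCost c a (Finset.sdiff_subset (t := {v₀})) hEB (B.restrict σ) := by
  have hB : B \ {v₀} = B \ A := by rw [← hinter, Finset.sdiff_inter_self_right]
  have hV : Finset.univ = A ∪ B \ {v₀} := by rw [hB, Finset.union_sdiff_self_eq_union, hunion]
  have hdisj : Disjoint A (B \ {v₀}) := hB ▸ Finset.disjoint_sdiff
  rw [partialCost_restrict, partialCost_restrict, hV, assignmentCost_union c a hdisj hEdisj]

end Cut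

theorem relax_constraint_at_cut_general {V Λ M : Type*} [Fintype V] [DecidableEq V] [Nonempty Λ]
    [AddCommGroup M] [ConditionallyCompleteLattice M] [AddLeftMono M]
    (c : V → Λ → M) (a : V × V → Λ → Λ → M)
    {EA EB : Finset (V × V)} (hEdisj : Disjoint EA EB) {A B : Finset V} {v₀ : V}
    (hunion : A ∪ B = Finset.univ) (hinter : A ∩ B = {v₀}) (hv₀A : v₀ ∈ A) (hv₀B : v₀ ∈ B)
    (hEA : ∀ e ∈ EA, e.1 ∈ A ∧ e.2 ∈ A) (hEB : ∀ e ∈ EB, e.1 ∈ B ∧ e.2 ∈ B)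
    (hbdd : BddBelow (Set.range (assignmentCost c a Finset.univ (EA ∪ EB)))) :
    ⨅ σ, assignmentCost c a Finset.univ (EA ∪ EB) σ =
      ⨅ l, ((⨅ σA : {σA : A → Λ // σA ⟨v₀, hv₀A⟩ = l},
          partialCost c a (Finset.Subset.refl A) hEA σA.1) +
        ⨅ σB : {σB : B → Λ // σB ⟨v₀, hv₀B⟩ = l},
          partialCost c a (Finset.sdiff_subset (t := {v₀})) hEB σB.1) := by
  have hsurj := restrictAtCut_surjective (Λ := Λ) hunion hinter hv₀A hv₀B
  have hcost := funext (assignmentCost_univ_eq_partialCost_add c a hEdisj hunion hinter hEA hEB)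
  rw [hcost] at hbdd ⊢
  exact (hsurj.iInf_comp _).trans <| ciInf_pullback_add (fun l => ⟨fun _ => l, rfl⟩)
    (fun l => ⟨fun _ => l, rfl⟩) (hsurj.range_comp _ ▸ hbdd)

/-- **Relaxation of constraints at a cut layer.**  The vertex `v₀` separates the
net into an upstream part `A` and a downstream part `B` (`A ∪ B = V`,
`A ∩ B = {v₀}`, every edge lying entirely within `A` or within `B`).  Then the
global minimum total cost over schema assignments `σ : V → Λ` equals
`min_{l ∈ Λ} (f l + g l)`, where `f l` is the constrained minimum over the part
`A` with `σ_A v₀ = l` (counting the cost of all vertices of `A`) and `g l` is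
the constrained minimum over the part `B` with `σ_B v₀ = l` (counting the cost
of the vertices of `B \ {v₀}` so `v₀` is not double-counted). -/
theorem relax_constraint_at_cut (V : Type*) [Fintype V] [DecidableEq V]
    (Λ : Type*) [Fintype Λ] [Nonempty Λ]
    (c : V → Λ → ℝ)
    (EA EB : Finset (V × V)) (hEdisj : Disjoint EA EB)
    (a : V × V → Λ → Λ → ℝ)
    (A B : Finset V) (v₀ : V)
    (hunion : A ∪ B = Finset.univ)
    (hinter : A ∩ B = {v₀})
    (hv₀A : v₀ ∈ A) (hv₀B : v₀ ∈ B)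
    (hEA : ∀ e ∈ EA, e.1 ∈ A ∧ e.2 ∈ A)
    (hEB : ∀ e ∈ EB, e.1 ∈ B ∧ e.2 ∈ B) :
    sInf {x : ℝ | ∃ σ : V → Λ,
        x = (∑ u : V, c u (σ u)) + ∑ e ∈ EA ∪ EB, a e (σ e.1) (σ e.2)}
      = sInf {x : ℝ | ∃ l : Λ,
          x = sInf {y : ℝ | ∃ σA : {u // u ∈ A} → Λ, σA ⟨v₀, hv₀A⟩ = l ∧
                y = (∑ u ∈ A.attach, c u.1 (σA u))
                  + ∑ e ∈ EA.attach,
                      a e.1 (σA ⟨e.1.1, (hEA e.1 e.2).1⟩)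
                            (σA ⟨e.1.2, (hEA e.1 e.2).2⟩)}
            + sInf {y : ℝ | ∃ σB : {u // u ∈ B} → Λ, σB ⟨v₀, hv₀B⟩ = l ∧
                y = (∑ u ∈ (B \ {v₀}).attach,
                      c u.1 (σB ⟨u.1, (Finset.mem_sdiff.mp u.2).1⟩))
                  + ∑ e ∈ EB.attach,
                      a e.1 (σB ⟨e.1.1, (hEB e.1 e.2).1⟩)
                            (σB ⟨e.1.2, (hEB e.1 e.2).2⟩)}} := by
  simp only [sInf_setOf_exists_eq, sInf_setOf_exists_and_eq]
  exact relax_constraint_at_cut_general c a hEdisj hunion hinter hv₀A hv₀B hEA hEB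
    (Set.finite_range _).bddBelow
end
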